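/- Let f(z) = z + Σ_{n≥2} a_n z^n and g(z) = z + Σ_{n≥2} b_n z^n be analytic on the unit disk 𝔻, with f and g nonvanishing on the punctured disk 0 < |z| < 1, and suppose |a_n| ≤ 1 and |b_n| ≤ 2/n for all n ≥ 2. Let r₄ ≈ 0.36027 be the unique root in (0,1) of the equation 2r − 3 + (2(3r − 2)/r)·log(1 − r) = 0. Then the function F(z) = z^3/(f(z)g(z)) satisfies |F'(z)(z/F(z))^2 − 1| < 1 for every z with 0 < |z| < r₄; in particular F belongs to the class 𝒰 in the disk |z| < r₄. -/

import Mathlib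

/-!
Write `p = f/z`, `q = g/z`, `h = pq`. Since `F = z/h`, one has
`F' (z/F)² - 1 = h - z h' - 1`. Expanding `p = ∑ αₖ zᵏ` and `q = ∑ βₗ zˡ`, this is minus the double
sum `∑ (k + l - 1) αₖ βₗ z^(k+l)` over `(k, l) ≠ (0, 0)`; with the truncated weight
`(k + l - 1 : ℕ)` the pair `(0, 0)` may be included at no cost (`hasSum_weighted_mul`).

The coefficient bounds make each term at most the corresponding term of the same double sum for the
majorants `P(r) = ∑ rᵏ = 1/(1-r)` and `Q(r) = 1 + ∑_{l ≥ 1} 2 rˡ/(l+1) = -2 log(1-r)/r - 1`.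
The majorant sum at `r` is `r (PQ)' - PQ + 1`, and the equation defining `r4` says exactly that this
equals `1` at `r = r4` (`hasSum_majorant`). For `‖z‖ < r4` the term at `(1, 1)` is strictly smaller,
so the modulus is strictly below `1`.
-/

lemma HasSum.of_eq {ι M : Type*} [AddCommMonoid M] [TopologicalSpace M] {u v : ι → M} {c d : M}
    (h : HasSum u c) (huv : ∀ i, v i = u i) (hdc : d = c) : HasSum v d := by
  rwa [funext huv, hdc]

/-- If `P = ∑ xₖ`, `P₁ = ∑ k xₖ` and likewise for `y`, the double sum of `xₖ yₗ` with weight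
`k + l - 1`, truncated to `0` at `(0, 0)`, is `P₁ Q + P Q₁ - P Q + x₀ y₀`. -/
lemma hasSum_weighted_mul {𝕜 : Type*} [RCLike 𝕜] {x y : ℕ → 𝕜} {P P₁ Q Q₁ : 𝕜}
    (hx : HasSum x P) (hx₁ : HasSum (fun k : ℕ => (k : 𝕜) * x k) P₁)
    (hy : HasSum y Q) (hy₁ : HasSum (fun l : ℕ => (l : 𝕜) * y l) Q₁) :
    HasSum (fun i : ℕ × ℕ => ((i.1 + i.2 - 1 : ℕ) : 𝕜) * (x i.1 * y i.2))
      (P₁ * Q + P * Q₁ - P * Q + x 0 * y 0) := by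
  have mul : ∀ {u v : ℕ → 𝕜} {U V : 𝕜}, HasSum u U → HasSum v V →
      HasSum (fun i : ℕ × ℕ => u i.1 * v i.2) (U * V) := fun hu hv =>
    hu.mul hv (summable_mul_of_summable_norm (summable_norm_iff.2 hu.summable)
      (summable_norm_iff.2 hv.summable))
  have h := (((mul hx₁ hy).add (mul hx hy₁)).sub (mul hx hy)).add
    (hasSum_ite_eq ((0, 0) : ℕ × ℕ) (x 0 * y 0))
  refine h.of_eq (fun i => ?_) rfl
  obtain ⟨k, l⟩ := i
  by_cases hkl : k + l = 0
  · obtain ⟨rfl, rfl⟩ : k = 0 ∧ l = 0 := by omega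
    simp
  · have hne : ((k, l) : ℕ × ℕ) ≠ (0, 0) := by
      intro h0
      simp only [Prod.mk.injEq] at h0
      omega
    rw [if_neg hne]
    push_cast [Nat.cast_sub (show 1 ≤ k + l by omega)]
    ring

/-- The majorant of `|b (l + 1)|`: `1` for `l = 0` and `2 / (l + 1)` for `l ≥ 1`. -/
noncomputable def majB (l : ℕ) : ℝ := if l = 0 then 1 else 2 / (l + 1)

lemma hasSum_majB {r : ℝ} (h0 : 0 < r) (h1 : r < 1) :
    HasSum (fun l : ℕ => majB l * r ^ l) (-2 * Real.log (1 - r) / r - 1) := by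
  have h := Real.hasSum_pow_div_log_of_abs_lt_one (x := r) (by rw [abs_of_pos h0]; exact h1)
  have h' := (h.mul_left (2 / r)).sub (hasSum_ite_eq (0 : ℕ) (1 : ℝ))
  refine h'.of_eq (fun l => ?_) ?_
  · have : (l : ℝ) + 1 ≠ 0 := by positivity
    unfold majB
    split_ifs with hl
    · subst hl
      simp [h0.ne']
      norm_num
    · field_simp
      ring
  · ring

lemma hasSum_mul_majB {r : ℝ} (h0 : 0 < r) (h1 : r < 1) :
    HasSum (fun l : ℕ => (l : ℝ) * (majB l * r ^ l))
      (2 / (1 - r) + 2 * Real.log (1 - r) / r) := by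
  have h := Real.hasSum_pow_div_log_of_abs_lt_one (x := r) (by rw [abs_of_pos h0]; exact h1)
  have h' := ((hasSum_geometric_of_lt_one h0.le h1).mul_left 2).sub (h.mul_left (2 / r))
  refine h'.of_eq (fun l => ?_) ?_
  · have : (l : ℝ) + 1 ≠ 0 := by positivity
    unfold majB
    split_ifs with hl
    · subst hl
      simp [h0.ne']
    · field_simp
      ring
  · field_simp
    ring

/-- At a root of the defining equation, the majorant double sum equals `1`. -/
lemma hasSum_majorant {r : ℝ} (h0 : 0 < r) (h1 : r < 1)
    (hroot : 2 * r - 3 + (2 * (3 * r - 2) / r) * Real.log (1 - r) = 0) :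
    HasSum (fun i : ℕ × ℕ => ((i.1 + i.2 - 1 : ℕ) : ℝ) * (r ^ i.1 * (majB i.2 * r ^ i.2))) 1 := by
  have h := hasSum_weighted_mul (hasSum_geometric_of_lt_one h0.le h1)
    (hasSum_coe_mul_geometric_of_norm_lt_one (r := r) (by rwa [Real.norm_of_nonneg h0.le]))
    (hasSum_majB h0 h1) (hasSum_mul_majB h0 h1)
  refine h.of_eq (fun _ => rfl) ?_
  have h1' : 1 - r ≠ 0 := by linarith
  simp only [majB, if_true, pow_zero]
  generalize Real.log (1 - r) = L at hroot ⊢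
  field_simp at hroot ⊢
  linear_combination hroot

lemma hasSum_shift {f : ℂ → ℂ} {a : ℕ → ℂ} (ha0 : a 0 = 0) {z : ℂ} (hz : z ≠ 0)
    (hf : HasSum (fun n : ℕ => a n * z ^ n) (f z)) :
    HasSum (fun k : ℕ => a (k + 1) * z ^ k) (f z / z) := by
  have h := ((hasSum_nat_add_iff' 1).2 hf).div_const z
  refine h.of_eq (fun k => ?_) ?_
  · field_simp
    ring
  · simp [ha0]

/-- With `p = f / z`, this is the expansion of `z p' = f' - f / z`. -/
lemma hasSum_mul_shift {f : ℂ → ℂ} {a : ℕ → ℂ} (ha0 : a 0 = 0) (ha : ∀ n, ‖a n‖ ≤ 1)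
    (hf : ∀ z ∈ Metric.ball (0:ℂ) 1, HasSum (fun n : ℕ => a n * z ^ n) (f z))
    {z : ℂ} (hz : z ≠ 0) (hz1 : ‖z‖ < 1) :
    HasSum (fun k : ℕ => (k : ℂ) * (a (k + 1) * z ^ k)) (deriv f z - f z / z) := by
  obtain ⟨R, hR, hR1⟩ := exists_between hz1
  have hR0 : 0 ≤ R := (norm_nonneg z).trans hR.le
  have hd := Complex.hasSum_deriv_of_summable_norm (F := fun (n : ℕ) (w : ℂ) => a n * w ^ n)
    (U := Metric.ball (0:ℂ) R) (summable_geometric_of_lt_one hR0 hR1)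
    (fun n => by fun_prop) Metric.isOpen_ball
    (fun n w hw => by
      rw [norm_mul, norm_pow]
      have hw' : ‖w‖ ≤ R := (mem_ball_zero_iff.1 hw).le
      calc ‖a n‖ * ‖w‖ ^ n ≤ 1 * R ^ n := by gcongr; exact ha n
        _ = R ^ n := one_mul _)
    (mem_ball_zero_iff.2 hR)
  have heq : (fun w => ∑' n : ℕ, a n * w ^ n) =ᶠ[nhds z] f := by
    filter_upwards [Metric.isOpen_ball.mem_nhds (mem_ball_zero_iff.2 hz1)] with w hw
    exact (hf w hw).tsum_eq
  rw [heq.deriv_eq] at hd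
  have hs := hasSum_shift ha0 hz (hf z (mem_ball_zero_iff.2 hz1))
  have h := ((hasSum_nat_add_iff' 1).2 hd).sub hs
  refine h.of_eq (fun k => ?_) ?_
  · simp
    ring
  · simp

/-- With `h = f g / z²`, this is the identity `F' (z/F)² - 1 = h - z h' - 1` for `F = z/h`,
written in terms of `f/z`, `g/z` and the derivatives of `f` and `g`. -/
lemma deriv_identity {f g F : ℂ → ℂ} (hF : ∀ z : ℂ, F z = z ^ 3 / (f z * g z)) {z : ℂ}
    (hz : z ≠ 0) (hfz : f z ≠ 0) (hgz : g z ≠ 0)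
    (hf : DifferentiableAt ℂ f z) (hg : DifferentiableAt ℂ g z) :
    deriv F z * (z / F z) ^ 2 - 1 =
      -((deriv f z - f z / z) * (g z / z) + f z / z * (deriv g z - g z / z)
        - f z / z * (g z / z) + 1) := by
  have hd := ((hasDerivAt_pow 3 z).div (hf.hasDerivAt.mul hg.hasDerivAt)
    (mul_ne_zero hfz hgz)).deriv
  have hFe : F = (fun w => w ^ 3) / (f * g) := funext hF
  rw [hF z, hFe, hd]
  simp only [Pi.mul_apply]
  generalize deriv f z = f'
  generalize deriv g z = g'
  field_simp
  push_cast
  ring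

theorem radius_univalence_coeff_one_twoDivN
    (f g F : ℂ → ℂ) (a b : ℕ → ℂ)
    (hfa : AnalyticOnNhd ℂ f (Metric.ball (0:ℂ) 1))
    (hga : AnalyticOnNhd ℂ g (Metric.ball (0:ℂ) 1))
    (ha0 : a 0 = 0) (ha1 : a 1 = 1) (hb0 : b 0 = 0) (hb1 : b 1 = 1)
    (hf : ∀ z ∈ Metric.ball (0:ℂ) 1, HasSum (fun n : ℕ => a n * z ^ n) (f z))
    (hg : ∀ z ∈ Metric.ball (0:ℂ) 1, HasSum (fun n : ℕ => b n * z ^ n) (g z))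
    (hfne : ∀ z : ℂ, 0 < ‖z‖ → ‖z‖ < 1 → f z ≠ 0)
    (hgne : ∀ z : ℂ, 0 < ‖z‖ → ‖z‖ < 1 → g z ≠ 0)
    (hA : ∀ n : ℕ, 2 ≤ n → ‖a n‖ ≤ 1)
    (hB : ∀ n : ℕ, 2 ≤ n → ‖b n‖ ≤ 2 / (n : ℝ))
    (r4 : ℝ) (hr4mem : r4 ∈ Set.Ioo (0:ℝ) 1)
    (hr4root : 2 * r4 - 3 + (2 * (3 * r4 - 2) / r4) * Real.log (1 - r4) = 0)
    (hr4uniq : ∀ r ∈ Set.Ioo (0:ℝ) 1, 2 * r - 3 + (2 * (3 * r - 2) / r) * Real.log (1 - r) = 0 → r = r4)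
    (hF : ∀ z : ℂ, F z = z ^ 3 / (f z * g z)) :
    ∀ z : ℂ, 0 < ‖z‖ → ‖z‖ < r4 →
      ‖deriv F z * (z / F z) ^ 2 - 1‖ < 1 := by
  intro z hz0 hzr
  obtain ⟨hr0, hr1⟩ := hr4mem
  have hz1 : ‖z‖ < 1 := hzr.trans hr1
  have hz : z ≠ 0 := norm_pos_iff.1 hz0
  have hzb : z ∈ Metric.ball (0:ℂ) 1 := mem_ball_zero_iff.2 hz1
  have hA' : ∀ n, ‖a n‖ ≤ 1 := by
    intro n
    rcases n with _ | _ | n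
    · simp [ha0]
    · simp [ha1]
    · exact hA _ (by omega)
  have hB' : ∀ n, ‖b n‖ ≤ 1 := by
    intro n
    rcases n with _ | _ | n
    · simp [hb0]
    · simp [hb1]
    · refine (hB _ (by omega)).trans ?_
      rw [div_le_one (by positivity)]
      push_cast
      linarith [(Nat.cast_nonneg n : (0:ℝ) ≤ n)]
  have hBm : ∀ l, ‖b (l + 1)‖ ≤ majB l := by
    intro l
    unfold majB
    split_ifs with hl
    · simp [hl, hb1]
    · simpa using hB (l + 1) (by omega)
  have hS := hasSum_weighted_mul (hasSum_shift ha0 hz (hf z hzb))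
    (hasSum_mul_shift ha0 hA' hf hz hz1) (hasSum_shift hb0 hz (hg z hzb))
    (hasSum_mul_shift hb0 hB' hg hz hz1)
  have hM := hasSum_majorant hr0 hr1 hr4root
  simp only [zero_add, ha1, hb1, pow_zero, mul_one] at hS
  rw [deriv_identity hF hz (hfne z hz0 hz1) (hgne z hz0 hz1) (hfa z hzb).differentiableAt
    (hga z hzb).differentiableAt, norm_neg, ← hS.tsum_eq]
  have hterm : ∀ k l : ℕ, ‖((k + l - 1 : ℕ) : ℂ) * (a (k + 1) * z ^ k * (b (l + 1) * z ^ l))‖ ≤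
      ((k + l - 1 : ℕ) : ℝ) * (‖z‖ ^ k * (majB l * ‖z‖ ^ l)) := by
    intro k l
    simp only [norm_mul, norm_pow, Complex.norm_natCast]
    have h1 : ‖a (k + 1)‖ * ‖z‖ ^ k ≤ ‖z‖ ^ k :=
      mul_le_of_le_one_left (by positivity) (hA' _)
    have h2 := hBm l
    gcongr
  have hmaj0 : ∀ l, 0 ≤ majB l := fun l => (norm_nonneg _).trans (hBm l)
  have hle : ∀ k l : ℕ, ‖((k + l - 1 : ℕ) : ℂ) * (a (k + 1) * z ^ k * (b (l + 1) * z ^ l))‖ ≤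
      ((k + l - 1 : ℕ) : ℝ) * (r4 ^ k * (majB l * r4 ^ l)) := by
    intro k l
    refine (hterm k l).trans ?_
    have := hmaj0 l
    gcongr
  have hN := summable_norm_iff.2 hS.summable
  refine (norm_tsum_le_tsum_norm hN).trans_lt ?_
  -- Strictness comes from the index `(1, 1)`, where the weight is `1` and `‖z‖ ^ 2 < r4 ^ 2`.
  refine hasSum_lt (i := (1, 1)) (fun i => hle i.1 i.2) ?_ hN.hasSum hM
  refine (hterm 1 1).trans_lt ?_
  norm_num [majB]
  gcongr
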